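/- arXiv:2402.17729 — 5 statements merged into one kernel-verified Lean document; each statement's English description precedes it below -/
import Mathlib

section
/- For any C ≥ 1 and any loss vector ℓ ∈ ℝ^C, the FAAL objective recovers the worst-class loss in the limit of an unbounded constraint: sup_{τ ≥ 0} L_FAAL(ℓ, τ) = lim_{τ → ∞} L_FAAL(ℓ, τ) = max_c ℓ_c. -/
open Real Finset

/-- The probability simplex `Δ_C` in `ℝ^C`. -/
def simplex (C : ℕ) : Set (Fin C → ℝ) :=
  {w | (∀ c, 0 ≤ w c) ∧ ∑ c, w c = 1}

/-- The uniform distribution `U` on `C` classes. -/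
noncomputable def uniform (C : ℕ) : Fin C → ℝ := fun _ => 1 / C

/-- Kullback–Leibler divergence `KL(p‖q)` with the conventions `0·log(0/q) = 0`
(automatic since `0 * x = 0`) and `KL(p‖q) = ⊤` when `p c > 0` but `q c = 0`. -/
noncomputable def KL {C : ℕ} (p q : Fin C → ℝ) : EReal :=
  if ∀ c, 0 < p c → 0 < q c
  then ((∑ c, p c * Real.log (p c / q c) : ℝ) : EReal)
  else ⊤

/-- The FAAL objective `L_FAAL(ℓ, τ) = sup { Σ_c w_c ℓ_c : w ∈ Δ_C, KL(U‖w) ≤ τ }`. -/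
noncomputable def faal (C : ℕ) (ℓ : Fin C → ℝ) (τ : ℝ) : ℝ :=
  sSup {s | ∃ w ∈ simplex C, KL (uniform C) w ≤ (τ : EReal) ∧ s = ∑ c, w c * ℓ c}

theorem faal_le_aux {C : ℕ} (ℓ : Fin C → ℝ) (M : ℝ) (hM : ∀ c, ℓ c ≤ M)
    {w : Fin C → ℝ} (hw : w ∈ simplex C) : ∑ c, w c * ℓ c ≤ M := by
  calc ∑ c, w c * ℓ c ≤ ∑ c, w c * M :=
        Finset.sum_le_sum fun c _ => mul_le_mul_of_nonneg_left (hM c) (hw.1 c)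
    _ = M := by rw [← Finset.sum_mul, hw.2, one_mul]

theorem uniform_mem_aux {C : ℕ} (hC : 1 ≤ C) : uniform C ∈ simplex C := by
  have h : (C : ℝ) ≠ 0 := by positivity
  refine ⟨fun c => by unfold uniform; positivity, ?_⟩
  simp [uniform, h]

theorem KL_self_aux {C : ℕ} (hC : 1 ≤ C) : KL (uniform C) (uniform C) = 0 := by
  have h : (C : ℝ) ≠ 0 := by positivity
  unfold KL
  rw [if_pos (fun c hc => hc)]
  simp [uniform, h]

theorem faal_le_max_aux {C : ℕ} (hC : 1 ≤ C) (ℓ : Fin C → ℝ) (M : ℝ) (hM : ∀ c, ℓ c ≤ M)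
    {τ : ℝ} (hτ : 0 ≤ τ) : faal C ℓ τ ≤ M := by
  refine csSup_le ⟨_, uniform C, uniform_mem_aux hC, ?_, rfl⟩ ?_
  · rw [KL_self_aux hC]; exact_mod_cast hτ
  · rintro s ⟨w, hw, -, rfl⟩
    exact faal_le_aux ℓ M hM hw

theorem faal_eventually_aux {C : ℕ} (hC : 1 ≤ C) (ℓ : Fin C → ℝ) (M : ℝ) (hM : ∀ c, ℓ c ≤ M)
    (c₀ : Fin C) (hc₀ : ℓ c₀ = M) (a : ℝ) (ha : a < M) :
    ∀ᶠ τ : ℝ in Filter.atTop, a < faal C ℓ τ := by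
  have hCpos : (0 : ℝ) < C := by positivity
  obtain ⟨m, hm⟩ : ∃ m, m = ∑ c, uniform C c * ℓ c := ⟨_, rfl⟩
  obtain ⟨ε, hε0, hε1, hε⟩ : ∃ ε : ℝ, 0 < ε ∧ ε < 1 ∧ a < (1 - ε) * M + ε * m := by
    have hmM : m ≤ M := hm ▸ faal_le_aux ℓ M hM (uniform_mem_aux hC)
    have hd : 0 < M - m + (M - a) + 1 := by linarith
    refine ⟨(M - a) / (M - m + (M - a) + 1), div_pos (by linarith) hd,
      (div_lt_one hd).2 (by linarith), ?_⟩
    have h1 : (M - a) / (M - m + (M - a) + 1) * (M - m + (M - a) + 1) = M - a :=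
      div_mul_cancel₀ _ hd.ne'
    have h2 : 0 < (M - a) / (M - m + (M - a) + 1) := div_pos (by linarith) hd
    nlinarith [mul_pos h2 (sub_pos.2 ha)]
  let w : Fin C → ℝ := fun c => (1 - ε) * (if c = c₀ then 1 else 0) + ε * uniform C c
  have hpos : ∀ c, 0 < w c := by
    intro c
    have h1 : 0 < ε * uniform C c := by unfold uniform; positivity
    have h2 : 0 ≤ (1 - ε) * (if c = c₀ then (1 : ℝ) else 0) :=
      mul_nonneg (by linarith) (by split_ifs <;> norm_num)
    exact add_pos_of_nonneg_of_pos h2 h1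
  have hw : w ∈ simplex C := by
    refine ⟨fun c => (hpos c).le, ?_⟩
    simp only [w, Finset.sum_add_distrib, ← Finset.mul_sum, (uniform_mem_aux hC).2]
    simp
  have hval : ∑ c, w c * ℓ c = (1 - ε) * M + ε * m := by
    simp only [w, add_mul, Finset.sum_add_distrib, mul_assoc, ← Finset.mul_sum, ← hm]
    simp [hc₀]
  filter_upwards [Filter.eventually_ge_atTop
    (∑ c, uniform C c * Real.log (uniform C c / w c))] with τ hτ
  refine lt_of_lt_of_le (hval ▸ hε) (le_csSup ⟨M, ?_⟩ ⟨w, hw, ?_, rfl⟩)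
  · rintro s ⟨v, hv, -, rfl⟩
    exact faal_le_aux ℓ M hM hv
  · unfold KL
    rw [if_pos (fun c _ => hpos c)]
    exact_mod_cast hτ

/-- as the constraint becomes unbounded, the FAAL objective
recovers the worst-class loss:
`sup_{τ ≥ 0} L_FAAL(ℓ, τ) = lim_{τ → ∞} L_FAAL(ℓ, τ) = max_c ℓ_c`. -/
theorem faal_tendsto_worst_class (C : ℕ) (hC : 1 ≤ C) (ℓ : Fin C → ℝ) :
    (⨆ τ : {t : ℝ // 0 ≤ t}, faal C ℓ τ) =
      Finset.univ.sup' ⟨⟨0, hC⟩, Finset.mem_univ _⟩ ℓ ∧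
    Filter.Tendsto (fun τ : ℝ => faal C ℓ τ) Filter.atTop
      (nhds (Finset.univ.sup' ⟨⟨0, hC⟩, Finset.mem_univ _⟩ ℓ)) := by
  have hM : ∀ c, ℓ c ≤ Finset.univ.sup' ⟨⟨0, hC⟩, Finset.mem_univ _⟩ ℓ :=
    fun c => Finset.le_sup' ℓ (Finset.mem_univ c)
  obtain ⟨c₀, -, hc₀⟩ := Finset.exists_mem_eq_sup' (s := Finset.univ)
    ⟨⟨0, hC⟩, Finset.mem_univ _⟩ ℓ
  generalize Finset.univ.sup' ⟨⟨0, hC⟩, Finset.mem_univ _⟩ ℓ = M at hM hc₀ ⊢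
  have hT : Filter.Tendsto (fun τ : ℝ => faal C ℓ τ) Filter.atTop (nhds M) := by
    refine tendsto_order.2 ⟨fun a ha => faal_eventually_aux hC ℓ M hM c₀ hc₀.symm a ha, ?_⟩
    intro b hb
    filter_upwards [Filter.eventually_ge_atTop (0 : ℝ)] with τ hτ
    exact (faal_le_max_aux hC ℓ M hM hτ).trans_lt hb
  refine ⟨le_antisymm ?_ ?_, hT⟩
  · haveI : Nonempty {t : ℝ // 0 ≤ t} := ⟨⟨0, le_rfl⟩⟩
    exact ciSup_le fun τ => faal_le_max_aux hC ℓ M hM τ.2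
  · refine le_of_tendsto hT ?_
    filter_upwards [Filter.eventually_ge_atTop (0 : ℝ)] with τ hτ
    refine le_ciSup (f := fun τ : {t : ℝ // 0 ≤ t} => faal C ℓ τ) ⟨M, ?_⟩ ⟨τ, hτ⟩
    rintro _ ⟨t, rfl⟩
    exact faal_le_max_aux hC ℓ M hM t.2
end

section
/- KL-ball distributionally robust optimization duality (finite alphabet): for any C ≥ 1, any loss vector ℓ ∈ ℝ^C, and any τ > 0, sup{ Σ_c w_c ℓ_c : w ∈ Δ_C, KL(w‖U) ≤ τ } = inf_{λ > 0} [ λτ + λ·log( (1/C)·Σ_c exp(ℓ_c/λ) ) ]. -/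
open Real Finset

lemma aux_KL_eq (C : ℕ) (hC : 1 ≤ C) (w : Fin C → ℝ) :
    KL w (uniform C) = ((∑ c, w c * Real.log (w c * C) : ℝ) : EReal) := by
  have hC' : (0 : ℝ) < C := by exact_mod_cast hC
  unfold KL uniform
  rw [if_pos (fun c _ => by positivity)]
  simp

lemma aux_gibbs (C : ℕ) (hC : 1 ≤ C) (w : Fin C → ℝ) (hw : w ∈ simplex C) (a : Fin C → ℝ) :
    ∑ c, w c * a c ≤ ∑ c, w c * Real.log (w c * C) +
      Real.log ((1 / (C : ℝ)) * ∑ c, Real.exp (a c)) := by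
  have hC' : (0 : ℝ) < C := by exact_mod_cast hC
  obtain ⟨h0, h1⟩ := hw
  have : Nonempty (Fin C) := ⟨⟨0, hC⟩⟩
  have hS : 0 < ∑ c, Real.exp (a c) :=
    Finset.sum_pos (fun c _ => Real.exp_pos _) Finset.univ_nonempty
  set S := ∑ c, Real.exp (a c) with hSdef
  have hZ : 0 < (1 / (C : ℝ)) * S := by positivity
  have key : ∀ c, w c * a c - w c * Real.log (w c * C) - w c * Real.log ((1 / (C : ℝ)) * S)
      ≤ Real.exp (a c) / S - w c := by
    intro c
    rcases (h0 c).eq_or_lt with h | h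
    · rw [← h]
      have : 0 ≤ Real.exp (a c) / S := by positivity
      simpa using this
    · have hx : 0 < Real.exp (a c) / (w c * S) := by positivity
      have h2 := Real.log_le_sub_one_of_pos hx
      rw [Real.log_div (by positivity) (by positivity), Real.log_exp,
        Real.log_mul h.ne' hS.ne'] at h2
      rw [Real.log_mul h.ne' hC'.ne', Real.log_mul (by positivity) hS.ne', one_div, Real.log_inv]
      have h3 := mul_le_mul_of_nonneg_left h2 h.le
      have h4 : w c * (Real.exp (a c) / (w c * S) - 1) = Real.exp (a c) / S - w c := by
        field_simp
      rw [h4] at h3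
      linarith
  have := Finset.sum_le_sum (fun c (_ : c ∈ Finset.univ) => key c)
  rw [Finset.sum_sub_distrib, Finset.sum_sub_distrib, Finset.sum_sub_distrib,
    ← Finset.sum_mul, h1, ← Finset.sum_div, ← hSdef, div_self hS.ne'] at this
  linarith

lemma aux_weak (C : ℕ) (hC : 1 ≤ C) (ℓ : Fin C → ℝ) (τ : ℝ) (w : Fin C → ℝ)
    (hw : w ∈ simplex C) (hk : KL w (uniform C) ≤ (τ : EReal)) (lam : ℝ) (hl : 0 < lam) :
    ∑ c, w c * ℓ c ≤
      lam * τ + lam * Real.log ((1 / (C : ℝ)) * ∑ c, Real.exp (ℓ c / lam)) := by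
  rw [aux_KL_eq C hC, EReal.coe_le_coe_iff] at hk
  have h := aux_gibbs C hC w hw (fun c => ℓ c / lam)
  have h2 : ∑ c, w c * ℓ c = lam * ∑ c, w c * (ℓ c / lam) := by
    rw [Finset.mul_sum]
    exact Finset.sum_congr rfl (fun c _ => by field_simp)
  rw [h2, ← mul_add]
  exact mul_le_mul_of_nonneg_left (h.trans (by linarith)) hl.le

lemma aux_strong (C : ℕ) (hC : 1 ≤ C) (ℓ : Fin C → ℝ) (τ : ℝ) (hτ : 0 < τ) (ε : ℝ) (hε : 0 < ε) :
    ∃ w ∈ simplex C, KL w (uniform C) ≤ (τ : EReal) ∧ ∃ lam : ℝ, 0 < lam ∧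
      lam * τ + lam * Real.log ((1 / (C : ℝ)) * ∑ c, Real.exp (ℓ c / lam)) ≤
        ∑ c, w c * ℓ c + ε := by
  have hC' : (0 : ℝ) < C := by exact_mod_cast hC
  have : Nonempty (Fin C) := ⟨⟨0, hC⟩⟩
  have hS : ∀ b : ℝ, 0 < ∑ c, Real.exp (b * ℓ c) := fun b =>
    Finset.sum_pos (fun c _ => Real.exp_pos _) Finset.univ_nonempty
  let W : ℝ → Fin C → ℝ := fun b c => Real.exp (b * ℓ c) / ∑ d, Real.exp (b * ℓ d)
  let K : ℝ → ℝ := fun b =>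
    b * ∑ c, W b c * ℓ c - Real.log ((1 / (C : ℝ)) * ∑ c, Real.exp (b * ℓ c))
  have hW : ∀ b, W b ∈ simplex C := by
    intro b
    refine ⟨fun c => ?_, ?_⟩
    · have := hS b
      simp only [W]; positivity
    · simp only [W]
      rw [← Finset.sum_div, div_self (hS b).ne']
  have hK : ∀ b, ∑ c, W b c * Real.log (W b c * C) = K b := by
    intro b
    have e : ∀ c, W b c * Real.log (W b c * C) = b * (W b c * ℓ c)
        - W b c * Real.log ((1 / (C : ℝ)) * ∑ c, Real.exp (b * ℓ c)) := by
      intro c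
      have h1 : Real.log (W b c * C) = b * ℓ c -
          Real.log ((1 / (C : ℝ)) * ∑ c, Real.exp (b * ℓ c)) := by
        simp only [W]
        rw [Real.log_mul (by have := hS b; positivity) hC'.ne',
          Real.log_div (Real.exp_pos _).ne' (hS b).ne', Real.log_exp,
          Real.log_mul (by positivity) (hS b).ne', one_div, Real.log_inv]
        ring
      rw [h1]; ring
    rw [Finset.sum_congr rfl (fun c _ => e c), Finset.sum_sub_distrib, ← Finset.mul_sum,
      ← Finset.sum_mul, (hW b).2, one_mul]
  have hK0 : ∀ b, 0 ≤ K b := by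
    intro b
    have h := aux_gibbs C hC (W b) (hW b) (fun _ => 0)
    rw [hK b] at h
    simpa [hC'.ne'] using h
  have hcont : Continuous K := by
    have h1 : Continuous fun b : ℝ => ∑ c, Real.exp (b * ℓ c) := by fun_prop
    have h2 : ∀ c, Continuous fun b => W b c := fun c =>
      Continuous.div (by fun_prop) h1 (fun b => (hS b).ne')
    have h3 : Continuous fun b : ℝ => Real.log ((1 / (C : ℝ)) * ∑ c, Real.exp (b * ℓ c)) :=
      Continuous.log (by fun_prop) (fun b => by have := hS b; positivity)
    exact (continuous_id.mul (continuous_finsetSum _ fun c _ => (h2 c).mul continuous_const)).sub h3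
  have hKz : K 0 = 0 := by simp [K, hC'.ne']
  suffices h : ∃ b, 0 < b ∧ K b ≤ τ ∧ τ - K b ≤ b * ε by
    obtain ⟨b, hb, hk, hg⟩ := h
    refine ⟨W b, hW b, ?_, b⁻¹, inv_pos.2 hb, ?_⟩
    · rw [aux_KL_eq C hC, hK b]; exact_mod_cast hk
    · have e : ∀ c, ℓ c / b⁻¹ = b * ℓ c := fun c => by field_simp
      simp only [e]
      rw [← mul_add, inv_mul_le_iff₀ hb]
      simp only [K] at hg
      linarith
  rcases le_total (K (τ / ε)) τ with h | h
  · refine ⟨τ / ε, by positivity, h, ?_⟩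
    rw [div_mul_cancel₀ _ hε.ne']
    linarith [hK0 (τ / ε)]
  · have hpos : 0 ≤ τ / ε := by positivity
    obtain ⟨b, hb, hbe⟩ := intermediate_value_Icc hpos hcont.continuousOn
      (show τ ∈ Set.Icc (K 0) (K (τ / ε)) from ⟨by rw [hKz]; exact hτ.le, h⟩)
    have hb0 : 0 < b := by
      rcases hb.1.eq_or_lt with h' | h'
      · rw [← h', hKz] at hbe; linarith
      · exact h'
    exact ⟨b, hb0, hbe.le, by rw [hbe, sub_self]; positivity⟩

/-- KL-ball distributionally robust optimization duality on a
finite alphabet: for `τ > 0`,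
`sup{ Σ_c w_c ℓ_c : w ∈ Δ_C, KL(w‖U) ≤ τ } =
  inf_{λ > 0} [ λτ + λ·log((1/C)·Σ_c exp(ℓ_c/λ)) ]`. -/
theorem kl_dro_duality (C : ℕ) (hC : 1 ≤ C) (ℓ : Fin C → ℝ) (τ : ℝ) (hτ : 0 < τ) :
    sSup {s | ∃ w ∈ simplex C, KL w (uniform C) ≤ (τ : EReal) ∧ s = ∑ c, w c * ℓ c} =
      sInf {v | ∃ lam : ℝ, 0 < lam ∧
        v = lam * τ + lam * Real.log ((1 / (C : ℝ)) * ∑ c, Real.exp (ℓ c / lam))} := by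
  obtain ⟨w₀, hw₀, hk₀, lam₀, hl₀, -⟩ := aux_strong C hC ℓ τ hτ 1 one_pos
  have hub : ∀ lam : ℝ, 0 < lam →
      lam * τ + lam * Real.log ((1 / (C : ℝ)) * ∑ c, Real.exp (ℓ c / lam)) ∈ upperBounds
      {s | ∃ w ∈ simplex C, KL w (uniform C) ≤ (τ : EReal) ∧ s = ∑ c, w c * ℓ c} := by
    rintro lam hl s ⟨w, hw, hk, rfl⟩
    exact aux_weak C hC ℓ τ w hw hk lam hl
  have hlb : ∀ w ∈ simplex C, KL w (uniform C) ≤ (τ : EReal) →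
      ∑ c, w c * ℓ c ∈ lowerBounds {v | ∃ lam : ℝ, 0 < lam ∧
        v = lam * τ + lam * Real.log ((1 / (C : ℝ)) * ∑ c, Real.exp (ℓ c / lam))} := by
    rintro w hw hk v ⟨lam, hl, rfl⟩
    exact aux_weak C hC ℓ τ w hw hk lam hl
  apply le_antisymm
  · refine csSup_le ⟨_, w₀, hw₀, hk₀, rfl⟩ ?_
    rintro s ⟨w, hw, hk, rfl⟩
    exact le_csInf ⟨_, lam₀, hl₀, rfl⟩ (fun v hv => hlb w hw hk hv)
  · refine le_of_forall_pos_le_add fun ε hε => ?_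
    obtain ⟨w, hw, hk, lam, hl, h⟩ := aux_strong C hC ℓ τ hτ ε hε
    have h1 := csInf_le ⟨_, hlb w hw hk⟩ ⟨lam, hl, rfl⟩
    have h2 := le_csSup ⟨_, hub lam hl⟩ ⟨w, hw, hk, rfl⟩
    linarith
end

section
/- Finite-sample form of the paper's Theorem 1 (generalization guarantee of the FAAL loss): let C ≥ 1, τ ≥ 0, and ℓ ∈ ℝ^C be a vector of class losses. Define the KL-ball worst-case loss L_FAAL = sup{ Σ_c w_c ℓ_c : w ∈ Δ_C, KL(w‖U) ≤ τ }. Let Y_1, …, Y_n be i.i.d. class labels uniformly distributed on {1, …, C}, and let L̂ = (1/n)·Σ_{i=1}^n ℓ(Y_i) = Σ_c P̂_n(c)·ℓ_c denote the empirical test loss under the realized (shifted) class proportions. Then Pr( L̂ ≤ L_FAAL ) ≥ 1 − (n + 1)^C · exp(−n·τ); i.e., the FAAL objective upper-bounds the loss under the unknown group distribution shift with probability at least 1 − e^{−τn + C·log(n+1)}. -/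
open Real Finset

open MeasureTheory ENNReal

/-- Empirical distribution of a sequence of labels. -/
noncomputable def empDist {C n : ℕ} (f : Fin n → Fin C) (c : Fin C) : ℝ :=
  ((Finset.univ.filter (fun i => f i = c)).card : ℝ) / n

lemma empDist_sum {C n : ℕ} (hn : 1 ≤ n) (f : Fin n → Fin C) (g : Fin C → ℝ) :
    ∑ i, g (f i) = n * ∑ c, empDist f c * g c := by
  have hn0 : (n : ℝ) ≠ 0 := by positivity
  rw [← Finset.sum_fiberwise (s := Finset.univ) (g := f), Finset.mul_sum]
  refine Finset.sum_congr rfl fun c _ => ?_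
  rw [Finset.sum_congr rfl (g := fun _ => g c)]
  · rw [Finset.sum_const, nsmul_eq_mul, empDist]
    field_simp
  · intro i hi
    rw [(Finset.mem_filter.1 hi).2]

lemma empDist_simplex {C n : ℕ} (hn : 1 ≤ n) (f : Fin n → Fin C) :
    empDist f ∈ simplex C := by
  have hn0 : (n : ℝ) ≠ 0 := by positivity
  refine ⟨fun c => by unfold empDist; positivity, ?_⟩
  have h := empDist_sum hn f (fun _ => 1)
  simp at h
  exact (mul_left_cancel₀ hn0 (by simpa using h)).symm

lemma empDist_pos {C n : ℕ} (hn : 1 ≤ n) (f : Fin n → Fin C) (i : Fin n) :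
    0 < empDist f (f i) := by
  have : 0 < (Finset.univ.filter (fun j => f j = f i)).card :=
    Finset.card_pos.2 ⟨i, by simp⟩
  unfold empDist
  positivity

lemma KL_uniform {C : ℕ} (hC : 1 ≤ C) (p : Fin C → ℝ) :
    KL p (uniform C) = ((∑ c, p c * Real.log (p c / uniform C c) : ℝ) : EReal) := by
  unfold KL
  rw [if_pos]
  intro c _
  unfold uniform
  positivity

lemma prob_le {C n : ℕ} (hC : 1 ≤ C) (hn : 1 ≤ n) (f : Fin n → Fin C) (τ : ℝ)
    (h : ¬ KL (empDist f) (uniform C) ≤ (τ : EReal)) :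
    ∏ i, uniform C (f i) ≤ Real.exp (-(n : ℝ) * τ) * ∏ i, empDist f (f i) := by
  rw [KL_uniform hC, EReal.coe_le_coe_iff, not_le] at h
  have hu : ∀ c, 0 < uniform C c := fun c => by unfold uniform; positivity
  have h1 := empDist_sum hn f (fun c => Real.log (empDist f c / uniform C c))
  have h2 : (n : ℝ) * τ ≤ ∑ i, Real.log (empDist f (f i) / uniform C (f i)) := by
    rw [h1]; gcongr
  have h3 : Real.exp (n * τ) ≤ ∏ i, (empDist f (f i) / uniform C (f i)) := by
    refine (Real.exp_le_exp.2 h2).trans_eq ?_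
    rw [Real.exp_sum]
    exact Finset.prod_congr rfl fun i _ => Real.exp_log (div_pos (empDist_pos hn f i) (hu _))
  rw [Finset.prod_div_distrib, le_div_iff₀ (Finset.prod_pos fun i _ => hu _)] at h3
  calc ∏ i, uniform C (f i)
      = Real.exp (-(n : ℝ) * τ) * (Real.exp (n * τ) * ∏ i, uniform C (f i)) := by
        rw [← mul_assoc, ← Real.exp_add]; simp
    _ ≤ _ := by gcongr

/-- The type (vector of counts) of a sequence. -/
def typeOf {C n : ℕ} (f : Fin n → Fin C) (c : Fin C) : Fin (n + 1) :=
  ⟨(Finset.univ.filter (fun i => f i = c)).card,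
    Nat.lt_succ_of_le ((Finset.card_le_univ _).trans_eq (Fintype.card_fin n))⟩

lemma sum_types {C n : ℕ} (hn : 1 ≤ n) :
    ∑ f : Fin n → Fin C, ∏ i, empDist f (f i) ≤ ((n : ℝ) + 1) ^ C := by
  classical
  rw [← Finset.sum_fiberwise (s := Finset.univ) (g := typeOf)]
  have key : ∀ T : Fin C → Fin (n + 1),
      ∑ f ∈ Finset.univ.filter (fun f : Fin n → Fin C => typeOf f = T),
        ∏ i, empDist f (f i) ≤ 1 := by
    intro T
    rcases (Finset.univ.filter (fun f : Fin n → Fin C => typeOf f = T)).eq_empty_or_nonempty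
      with h | ⟨f₀, h₀⟩
    · rw [h]; simp
    · have h₀' := (Finset.mem_filter.1 h₀).2
      have he : ∀ f : Fin n → Fin C, typeOf f = T → empDist f = empDist f₀ := by
        intro f hf
        funext c
        have h4 : (typeOf f c : ℕ) = typeOf f₀ c := by rw [hf, h₀']
        simp only [typeOf] at h4
        simp only [empDist, h4]
      have hs := empDist_simplex hn f₀
      calc ∑ f ∈ Finset.univ.filter (fun f : Fin n → Fin C => typeOf f = T),
            ∏ i, empDist f (f i)
          = ∑ f ∈ Finset.univ.filter (fun f : Fin n → Fin C => typeOf f = T),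
            ∏ i, empDist f₀ (f i) :=
            Finset.sum_congr rfl fun f hf => by rw [he f (Finset.mem_filter.1 hf).2]
        _ ≤ ∑ f : Fin n → Fin C, ∏ i, empDist f₀ (f i) :=
            Finset.sum_le_sum_of_subset_of_nonneg (Finset.filter_subset _ _)
              fun f _ _ => Finset.prod_nonneg fun i _ => hs.1 _
        _ = ∏ _i : Fin n, ∑ c, empDist f₀ c := by
            rw [Finset.prod_univ_sum]; simp
        _ = 1 := by rw [hs.2]; simp
  refine (Finset.sum_le_sum fun T _ => key T).trans_eq ?_
  simp

lemma emp_le_sup {C n : ℕ} (hn : 1 ≤ n) (ℓ : Fin C → ℝ) (τ : ℝ) (f : Fin n → Fin C)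
    (h : KL (empDist f) (uniform C) ≤ (τ : EReal)) :
    (1 / (n : ℝ)) * ∑ i, ℓ (f i) ≤
        sSup {s | ∃ w ∈ simplex C, KL w (uniform C) ≤ (τ : EReal) ∧
          s = ∑ c, w c * ℓ c} := by
  have hn0 : (n : ℝ) ≠ 0 := by positivity
  refine le_csSup ⟨∑ c, |ℓ c|, ?_⟩ ⟨empDist f, empDist_simplex hn f, h, ?_⟩
  · rintro s ⟨w, hw, -, rfl⟩
    refine Finset.sum_le_sum fun c _ => ?_
    have h1 : w c ≤ 1 := by
      rw [← hw.2]
      exact Finset.single_le_sum (fun c _ => hw.1 c) (Finset.mem_univ c)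
    calc w c * ℓ c ≤ w c * |ℓ c| := mul_le_mul_of_nonneg_left (le_abs_self _) (hw.1 c)
      _ ≤ 1 * |ℓ c| := mul_le_mul_of_nonneg_right h1 (abs_nonneg _)
      _ = _ := one_mul _
  · rw [empDist_sum hn f ℓ]
    field_simp

/-- finite-sample generalization guarantee of the FAAL loss
(paper's Theorem 1, finite-sample form).  With
`L_FAAL = sup{ Σ_c w_c ℓ_c : w ∈ Δ_C, KL(w‖U) ≤ τ }` and `Y_1, …, Y_n` i.i.d.
uniform class labels, the empirical test loss `L̂ = (1/n)·Σ_i ℓ(Y_i)` satisfies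
`Pr(L̂ ≤ L_FAAL) ≥ 1 − (n + 1)^C · exp(−n·τ)`. -/
theorem faal_generalization_finite_sample {Ω : Type*} [MeasurableSpace Ω]
    (μ : Measure Ω) [IsProbabilityMeasure μ] (C n : ℕ) (hC : 1 ≤ C) (hn : 1 ≤ n)
    (Y : Fin n → Ω → Fin C) (hmeas : ∀ i, Measurable (Y i))
    (hiid : ∀ f : Fin n → Fin C,
      μ {ω | ∀ i, Y i ω = f i} = ∏ i, ENNReal.ofReal (uniform C (f i)))
    (ℓ : Fin C → ℝ) (τ : ℝ) (hτ : 0 ≤ τ) :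
    1 - ((n : ℝ≥0∞) + 1) ^ C * ENNReal.ofReal (Real.exp (-(n : ℝ) * τ)) ≤
      μ {ω | (1 / (n : ℝ)) * ∑ i, ℓ (Y i ω) ≤
        sSup {s | ∃ w ∈ simplex C, KL w (uniform C) ≤ (τ : EReal) ∧
          s = ∑ c, w c * ℓ c}} := by
  classical
  set S := {ω | (1 / (n : ℝ)) * ∑ i, ℓ (Y i ω) ≤
        sSup {s | ∃ w ∈ simplex C, KL w (uniform C) ≤ (τ : EReal) ∧
          s = ∑ c, w c * ℓ c}} with hS
  have hu : ∀ c, 0 ≤ uniform C c := fun c => by unfold uniform; positivity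
  set B := Finset.univ.filter
    (fun f : Fin n → Fin C => ¬ KL (empDist f) (uniform C) ≤ (τ : EReal)) with hB
  have hsub : Sᶜ ⊆ ⋃ f ∈ B, {ω | ∀ i, Y i ω = f i} := by
    intro ω hω
    simp only [Set.mem_iUnion]
    refine ⟨fun i => Y i ω, ?_, fun i => rfl⟩
    rw [hB, Finset.mem_filter]
    exact ⟨Finset.mem_univ _, fun h => hω (emp_le_sup hn ℓ τ (fun i => Y i ω) h)⟩
  have hbad : μ Sᶜ ≤ ((n : ℝ≥0∞) + 1) ^ C * ENNReal.ofReal (Real.exp (-(n : ℝ) * τ)) := by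
    calc μ Sᶜ ≤ ∑ f ∈ B, μ {ω | ∀ i, Y i ω = f i} :=
          (measure_mono hsub).trans (measure_biUnion_finset_le _ _)
      _ = ∑ f ∈ B, ENNReal.ofReal (∏ i, uniform C (f i)) :=
          Finset.sum_congr rfl fun f _ => by
            rw [hiid, ENNReal.ofReal_prod_of_nonneg fun i _ => hu _]
      _ = ENNReal.ofReal (∑ f ∈ B, ∏ i, uniform C (f i)) :=
          (ENNReal.ofReal_sum_of_nonneg fun f _ => Finset.prod_nonneg fun i _ => hu _).symm
      _ ≤ ENNReal.ofReal (((n : ℝ) + 1) ^ C * Real.exp (-(n : ℝ) * τ)) := by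
          refine ENNReal.ofReal_le_ofReal ?_
          calc ∑ f ∈ B, ∏ i, uniform C (f i)
              ≤ ∑ f ∈ B, Real.exp (-(n : ℝ) * τ) * ∏ i, empDist f (f i) :=
                Finset.sum_le_sum fun f hf => prob_le hC hn f τ (Finset.mem_filter.1 hf).2
            _ ≤ ∑ f : Fin n → Fin C, Real.exp (-(n : ℝ) * τ) * ∏ i, empDist f (f i) :=
                Finset.sum_le_sum_of_subset_of_nonneg (Finset.filter_subset _ _)
                  fun f _ _ => mul_nonneg (Real.exp_pos _).le
                    (Finset.prod_nonneg fun i _ => (empDist_pos hn f i).le)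
            _ = (∑ f : Fin n → Fin C, ∏ i, empDist f (f i)) * Real.exp (-(n : ℝ) * τ) := by
                rw [← Finset.mul_sum, mul_comm]
            _ ≤ _ := mul_le_mul_of_nonneg_right (sum_types hn) (Real.exp_pos _).le
      _ = _ := by
          rw [ENNReal.ofReal_mul (by positivity), ENNReal.ofReal_pow (by positivity),
            ENNReal.ofReal_add (by positivity) (by positivity), ENNReal.ofReal_natCast,
            ENNReal.ofReal_one]
  rw [tsub_le_iff_right]
  calc (1 : ℝ≥0∞) = μ (S ∪ Sᶜ) := by rw [Set.union_compl_self, measure_univ]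
    _ ≤ μ S + μ Sᶜ := measure_union_le _ _
    _ ≤ _ := by gcongr
end

section
/- Asymptotic form of the paper's Theorem 1: fix C ≥ 1, τ > 0, and a loss vector ℓ ∈ ℝ^C, and let L_FAAL = sup{ Σ_c w_c ℓ_c : w ∈ Δ_C, KL(w‖U) ≤ τ }. With Y_1, …, Y_n i.i.d. uniform on {1, …, C} and L̂_n = (1/n)·Σ_{i=1}^n ℓ(Y_i), for every ε ∈ (0, τ) there exists N such that for all n ≥ N, Pr( L̂_n > L_FAAL ) ≤ exp(−n·(τ − ε)); in particular Pr( L̂_n ≤ L_FAAL ) → 1 as n → ∞, i.e., the failure probability is e^{−τn + o(n)}. -/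
open Real Finset

open MeasureTheory ENNReal

def cnt {n C : ℕ} (f : Fin n → Fin C) (c : Fin C) : ℕ := #{i | f i = c}

theorem sum_cnt {n C : ℕ} (f : Fin n → Fin C) (g : Fin C → ℝ) :
    ∑ i, g (f i) = ∑ c, (cnt f c : ℝ) * g c := by
  rw [← Finset.sum_fiberwise' Finset.univ f g]
  simp [cnt]

theorem prod_cnt {n C : ℕ} (f : Fin n → Fin C) (g : Fin C → ℝ) :
    ∏ i, g (f i) = ∏ c, g c ^ cnt f c := by
  rw [← Finset.prod_fiberwise' Finset.univ f g]
  simp [cnt]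

theorem cnt_le {n C : ℕ} (f : Fin n → Fin C) (c : Fin C) : cnt f c ≤ n := by
  unfold cnt
  exact (Finset.card_le_univ _).trans (by simp)

theorem fiber_bound {n C : ℕ} (hC : 1 ≤ C) (hn : 1 ≤ n) (τ : ℝ) (f : Fin n → Fin C)
    (hf : τ ≤ ∑ c, ((cnt f c : ℝ) / n) * Real.log (((cnt f c : ℝ) / n) / uniform C c))
    (T : Finset (Fin n → Fin C)) (hT : ∀ g ∈ T, cnt g = cnt f) :
    (#T : ℝ) ≤ (C : ℝ) ^ n * Real.exp (-(n : ℝ) * τ) := by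
  have hn0 : (0 : ℝ) < n := by exact_mod_cast hn
  have hC0 : (0 : ℝ) < C := by exact_mod_cast hC
  set w : Fin C → ℝ := fun c => (cnt f c : ℝ) / n with hw
  have hw0 : ∀ c, 0 ≤ w c := fun c => by positivity
  have hcs : ∑ c, (cnt f c : ℝ) = n := by
    have := sum_cnt f (fun _ => 1)
    simpa using this.symm
  have hw1 : ∑ c, w c = 1 := by
    simp only [hw]
    rw [← Finset.sum_div, hcs, div_self hn0.ne']
  have hpos : ∀ i, 0 < w (f i) := by
    intro i
    have : 0 < cnt f (f i) := Finset.card_pos.mpr ⟨i, by simp⟩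
    simp only [hw]
    positivity
  have hP : ∀ g ∈ T, ∏ i, w (g i) = ∏ i, w (f i) := by
    intro g hg
    rw [prod_cnt, prod_cnt, hT g hg]
  have h1 : (#T : ℝ) * ∏ i, w (f i) ≤ 1 := by
    calc (#T : ℝ) * ∏ i, w (f i) = ∑ g ∈ T, ∏ i, w (g i) := by
          rw [Finset.sum_congr rfl hP]; simp
      _ ≤ ∑ g : Fin n → Fin C, ∏ i, w (g i) :=
          Finset.sum_le_sum_of_subset_of_nonneg (Finset.subset_univ _)
            (fun g _ _ => Finset.prod_nonneg fun i _ => hw0 _)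
      _ = ∏ _i : Fin n, ∑ c, w c := by
          rw [Finset.prod_univ_sum]; simp
      _ = 1 := by simp [hw1]
  have hPpos : 0 < ∏ i, w (f i) := Finset.prod_pos fun i _ => hpos i
  have h2 : (n : ℝ) * τ ≤ Real.log (C ^ n * ∏ i, w (f i)) := by
    have e : Real.log (C ^ n * ∏ i, w (f i)) = ∑ i, Real.log (w (f i) / uniform C (f i)) := by
      have : (C : ℝ) ^ n * ∏ i, w (f i) = ∏ i, (w (f i) / uniform C (f i)) := by
        simp [uniform, Finset.prod_mul_distrib, mul_comm]
      rw [this, Real.log_prod]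
      intro i _
      have := hpos i
      simp only [uniform]
      positivity
    rw [e, sum_cnt f (fun c => Real.log (w c / uniform C c))]
    calc (n : ℝ) * τ ≤ n * _ := mul_le_mul_of_nonneg_left hf hn0.le
      _ = _ := by
        rw [Finset.mul_sum]
        refine Finset.sum_congr rfl fun c _ => ?_
        simp only [hw]
        field_simp
  have h3 : Real.exp (n * τ) ≤ C ^ n * ∏ i, w (f i) :=
    (Real.le_log_iff_exp_le (by positivity)).mp h2
  rw [neg_mul, Real.exp_neg, ← div_eq_mul_inv, le_div_iff₀ (Real.exp_pos _)]
  calc (#T : ℝ) * Real.exp (n * τ) ≤ #T * (C ^ n * ∏ i, w (f i)) := by gcongr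
    _ = C ^ n * (#T * ∏ i, w (f i)) := by ring
    _ ≤ C ^ n * 1 := by gcongr
    _ = C ^ n := mul_one _

theorem bad_bound {n C : ℕ} (hC : 1 ≤ C) (hn : 1 ≤ n) (τ : ℝ) (S : Finset (Fin n → Fin C))
    (hf : ∀ f ∈ S,
      τ ≤ ∑ c, ((cnt f c : ℝ) / n) * Real.log (((cnt f c : ℝ) / n) / uniform C c)) :
    (#S : ℝ) ≤ ((n : ℝ) + 1) ^ C * ((C : ℝ) ^ n * Real.exp (-(n : ℝ) * τ)) := by
  classical
  have h1 : #(S.image cnt) ≤ (n + 1) ^ C := by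
    have : S.image cnt ⊆ Fintype.piFinset (fun _ : Fin C => Finset.range (n + 1)) := by
      intro k hk
      obtain ⟨f, _, rfl⟩ := Finset.mem_image.mp hk
      rw [Fintype.mem_piFinset]
      intro c
      rw [Finset.mem_range]
      exact Nat.lt_succ_of_le (cnt_le f c)
    refine (Finset.card_le_card this).trans ?_
    simp
  have h2 : (#S : ℝ) = ∑ k ∈ S.image cnt, (#{f ∈ S | cnt f = k} : ℝ) := by
    rw [Finset.card_eq_sum_card_image cnt S]
    push_cast
    rfl
  rw [h2]
  calc _ ≤ ∑ k ∈ S.image cnt, ((C : ℝ) ^ n * Real.exp (-(n : ℝ) * τ)) := by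
        refine Finset.sum_le_sum fun k hk => ?_
        obtain ⟨f, hfS, rfl⟩ := Finset.mem_image.mp hk
        exact fiber_bound hC hn τ f (hf f hfS) _ (fun g hg => (Finset.mem_filter.mp hg).2)
    _ = (#(S.image cnt) : ℝ) * ((C : ℝ) ^ n * Real.exp (-(n : ℝ) * τ)) := by simp
    _ ≤ _ := by
        gcongr
        exact_mod_cast h1

theorem bad_KL {n C : ℕ} (hC : 1 ≤ C) (hn : 1 ≤ n) (τ : ℝ) (ℓ : Fin C → ℝ) (f : Fin n → Fin C)
    (h : sSup {s | ∃ w ∈ simplex C, KL w (uniform C) ≤ (τ : EReal) ∧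
            s = ∑ c, w c * ℓ c} < (1 / (n : ℝ)) * ∑ i, ℓ (f i)) :
    τ ≤ ∑ c, ((cnt f c : ℝ) / n) * Real.log (((cnt f c : ℝ) / n) / uniform C c) := by
  have hn0 : (0 : ℝ) < n := by exact_mod_cast hn
  have hC0 : (0 : ℝ) < C := by exact_mod_cast hC
  by_contra! hlt
  refine absurd h (not_lt.mpr ?_)
  refine le_csSup ⟨∑ c, |ℓ c|, ?_⟩ ⟨fun c => (cnt f c : ℝ) / n, ⟨fun c => by positivity, ?_⟩, ?_, ?_⟩
  · rintro s ⟨w, ⟨hw0, hw1⟩, -, rfl⟩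
    refine Finset.sum_le_sum fun c _ => ?_
    have hc1 : w c ≤ 1 := hw1 ▸ Finset.single_le_sum (fun i _ => hw0 i) (Finset.mem_univ c)
    calc w c * ℓ c ≤ w c * |ℓ c| := mul_le_mul_of_nonneg_left (le_abs_self _) (hw0 c)
      _ ≤ 1 * |ℓ c| := by gcongr
      _ = _ := one_mul _
  · have := sum_cnt f (fun _ => 1)
    simp only [mul_one] at this
    rw [← Finset.sum_div, ← this]
    simp [hn0.ne']
  · rw [KL, if_pos]
    · exact_mod_cast hlt.le
    · intro c _
      simp only [uniform]
      positivity
  · rw [sum_cnt, Finset.mul_sum]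
    refine Finset.sum_congr rfl fun c _ => ?_
    ring

theorem poly_exp (C : ℕ) (ε : ℝ) (hε : 0 < ε) :
    ∃ N : ℕ, ∀ n ≥ N, ((n : ℝ) + 1) ^ C ≤ Real.exp (n * ε) := by
  have h := (isLittleO_pow_exp_pos_mul_atTop C hε).bound (Real.exp_pos (-ε))
  have h2 := (tendsto_natCast_atTop_atTop (R := ℝ)).comp (Filter.tendsto_add_atTop_nat 1)
  obtain ⟨N, hN⟩ := Filter.eventually_atTop.mp (h2.eventually h)
  refine ⟨N, fun n hn => ?_⟩
  have := hN n hn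
  simp only [Function.comp, Nat.cast_add, Nat.cast_one, Real.norm_eq_abs, Real.abs_exp,
    ← Real.exp_add] at this
  refine (le_abs_self _).trans (this.trans (le_of_eq ?_))
  congr 1
  ring

/-- asymptotic form of the paper's Theorem 1.  For each `n`, let
`Y_1, …, Y_n` be i.i.d. uniform class labels (on some probability space
`Ω n`), and let `L̂_n = (1/n)·Σ_i ℓ(Y_i)`.  Then for every `ε ∈ (0, τ)` the
failure probability `Pr(L̂_n > L_FAAL)` is eventually at most `exp(−n(τ − ε))`;
in particular `Pr(L̂_n ≤ L_FAAL) → 1`. -/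
theorem faal_generalization_asymptotic {Ω : ℕ → Type*}
    [∀ n, MeasurableSpace (Ω n)] (μ : ∀ n, Measure (Ω n))
    [∀ n, IsProbabilityMeasure (μ n)] (C : ℕ) (hC : 1 ≤ C)
    (Y : ∀ n, Fin n → Ω n → Fin C) (hmeas : ∀ n i, Measurable (Y n i))
    (hiid : ∀ n, ∀ f : Fin n → Fin C,
      μ n {ω | ∀ i, Y n i ω = f i} = ∏ i, ENNReal.ofReal (uniform C (f i)))
    (ℓ : Fin C → ℝ) (τ : ℝ) (hτ : 0 < τ) :
    (∀ ε : ℝ, ε ∈ Set.Ioo 0 τ → ∃ N : ℕ, ∀ n ≥ N,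
      μ n {ω | sSup {s | ∃ w ∈ simplex C, KL w (uniform C) ≤ (τ : EReal) ∧
            s = ∑ c, w c * ℓ c} < (1 / (n : ℝ)) * ∑ i, ℓ (Y n i ω)} ≤
        ENNReal.ofReal (Real.exp (-(n : ℝ) * (τ - ε)))) ∧
    Filter.Tendsto (fun n =>
      μ n {ω | (1 / (n : ℝ)) * ∑ i, ℓ (Y n i ω) ≤
        sSup {s | ∃ w ∈ simplex C, KL w (uniform C) ≤ (τ : EReal) ∧
          s = ∑ c, w c * ℓ c}}) Filter.atTop (nhds 1) := by
  have key : ∀ ε : ℝ, ε ∈ Set.Ioo 0 τ → ∃ N : ℕ, ∀ n ≥ N,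
      μ n {ω | sSup {s | ∃ w ∈ simplex C, KL w (uniform C) ≤ (τ : EReal) ∧
            s = ∑ c, w c * ℓ c} < (1 / (n : ℝ)) * ∑ i, ℓ (Y n i ω)} ≤
        ENNReal.ofReal (Real.exp (-(n : ℝ) * (τ - ε))) := by
    intro ε hε
    obtain ⟨N, hN⟩ := poly_exp C ε hε.1
    refine ⟨max N 1, fun n hn => ?_⟩
    have hn1 : 1 ≤ n := (le_max_right _ _).trans hn
    have hnN := hN n ((le_max_left _ _).trans hn)
    have hC0 : (0 : ℝ) < C := by exact_mod_cast hC
    classical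
    set L := sSup {s | ∃ w ∈ simplex C, KL w (uniform C) ≤ (τ : EReal) ∧
            s = ∑ c, w c * ℓ c} with hL
    let S : Finset (Fin n → Fin C) := {f | L < (1 / (n : ℝ)) * ∑ i, ℓ (f i)}
    have hS := bad_bound hC hn1 τ S (fun f hf => bad_KL hC hn1 τ ℓ f (Finset.mem_filter.mp hf).2)
    calc μ n {ω | L < (1 / (n : ℝ)) * ∑ i, ℓ (Y n i ω)}
        ≤ μ n (⋃ f ∈ S, {ω | ∀ i, Y n i ω = f i}) := by
          refine measure_mono fun ω hω => ?_
          simp only [Set.mem_iUnion]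
          exact ⟨fun i => Y n i ω, Finset.mem_filter.mpr ⟨Finset.mem_univ _, hω⟩, fun i => rfl⟩
      _ ≤ ∑ f ∈ S, μ n {ω | ∀ i, Y n i ω = f i} := measure_biUnion_finset_le _ _
      _ = ENNReal.ofReal (#S * (1 / (C : ℝ)) ^ n) := by
          simp only [hiid, uniform, Finset.prod_const, Finset.sum_const, nsmul_eq_mul,
            Finset.card_univ, Fintype.card_fin]
          rw [ENNReal.ofReal_mul (by positivity), ENNReal.ofReal_pow (by positivity)]
          simp
      _ ≤ _ := by
          refine ENNReal.ofReal_le_ofReal ?_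
          calc (#S : ℝ) * (1 / (C : ℝ)) ^ n
              ≤ (((n : ℝ) + 1) ^ C * ((C : ℝ) ^ n * Real.exp (-(n : ℝ) * τ)))
                  * (1 / (C : ℝ)) ^ n := by gcongr
            _ = ((n : ℝ) + 1) ^ C * Real.exp (-(n : ℝ) * τ) := by
                rw [one_div, inv_pow]
                field_simp
            _ ≤ Real.exp (n * ε) * Real.exp (-(n : ℝ) * τ) := by gcongr
            _ = _ := by
                rw [← Real.exp_add]
                congr 1
                ring
  refine ⟨key, ?_⟩
  obtain ⟨N, hN⟩ := key (τ / 2) ⟨by linarith, by linarith⟩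
  have hlim : Filter.Tendsto
      (fun n : ℕ => 1 - ENNReal.ofReal (Real.exp (-(n : ℝ) * (τ - τ / 2)))) Filter.atTop
      (nhds 1) := by
    have h0 : Filter.Tendsto (fun n : ℕ => Real.exp (-(n : ℝ) * (τ - τ / 2))) Filter.atTop
        (nhds 0) := by
      refine Real.tendsto_exp_atBot.comp ?_
      exact (Filter.tendsto_neg_atTop_atBot.comp tendsto_natCast_atTop_atTop).atBot_mul_const
        (by linarith)
    have h1 := ENNReal.tendsto_ofReal h0
    have h2 := ENNReal.Tendsto.sub (tendsto_const_nhds (x := (1 : ℝ≥0∞)) (f := Filter.atTop)) h1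
      (Or.inl ENNReal.one_ne_top)
    simpa using h2
  refine tendsto_of_tendsto_of_tendsto_of_le_of_le' hlim tendsto_const_nhds ?_
    (Filter.Eventually.of_forall fun n => prob_le_one)
  filter_upwards [Filter.eventually_ge_atTop N] with n hn
  rw [tsub_le_iff_right]
  refine le_trans ?_ (add_le_add_right (hN n hn) _)
  rw [← measure_univ (μ := μ n)]
  refine (measure_mono fun ω _ => ?_).trans (measure_union_le _ _)
  exact le_or_gt ((1 / (n : ℝ)) * ∑ i, ℓ (Y n i ω)) _
end

section
/- Continuity of the FAAL value in the constraint parameter at zero from the right combined with its bounds: for any C ≥ 1 and loss vector ℓ ∈ ℝ^C, the function τ ↦ L_FAAL(ℓ, τ) satisfies L_FAAL(ℓ, τ) → (1/C)·Σ_c ℓ_c as τ → 0⁺; quantitatively, 0 ≤ L_FAAL(ℓ, τ) − (1/C)·Σ_c ℓ_c ≤ (max_c ℓ_c − min_c ℓ_c)·√(τ/2), using that any feasible w satisfies the total-variation bound (1/2)·Σ_c |w_c − 1/C| ≤ √(τ/2). -/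
open Real Finset

lemma aux_log (x : ℝ) (hx : 0 < x) :
    0 ≤ Real.log x - (5 * x ^ 2 - 4 * x - 1) / (2 * x ^ 2 + 4 * x) := by
  set g : ℝ → ℝ := fun x => Real.log x - (5 * x ^ 2 - 4 * x - 1) / (2 * x ^ 2 + 4 * x) with hg
  have hd : ∀ y : ℝ, 0 < y → HasDerivAt g (4 * (y - 1) ^ 3 / (2 * y ^ 2 + 4 * y) ^ 2) y := by
    intro y hy
    have hD : (2 * y ^ 2 + 4 * y) ≠ 0 := by positivity
    have h1 : HasDerivAt (fun y : ℝ => 5 * y ^ 2 - 4 * y - 1) (10 * y - 4) y := by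
      have := (((hasDerivAt_pow 2 y).const_mul 5).sub ((hasDerivAt_id y).const_mul 4)).sub_const 1
      exact this.congr_deriv (by norm_num; try ring)
    have h2 : HasDerivAt (fun y : ℝ => 2 * y ^ 2 + 4 * y) (4 * y + 4) y := by
      have := (((hasDerivAt_pow 2 y).const_mul 2).add ((hasDerivAt_id y).const_mul 4))
      exact this.congr_deriv (by norm_num; try ring)
    refine ((Real.hasDerivAt_log hy.ne').sub (h1.div h2 hD)).congr_deriv ?_
    have hy2 : y + 2 ≠ 0 := by positivity
    have hy0 := hy.ne'
    have e : 2 * y ^ 2 + 4 * y = 2 * y * (y + 2) := by ring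
    rw [e]
    field_simp
    ring
  have g1 : g 1 = 0 := by simp [hg]; norm_num
  rcases le_total 1 x with h | h
  · have hm : MonotoneOn g (Set.Icc 1 x) := by
      apply monotoneOn_of_deriv_nonneg (convex_Icc _ _)
      · intro y hy
        exact (hd y (by linarith [hy.1])).continuousAt.continuousWithinAt
      · intro y hy
        rw [interior_Icc] at hy
        exact (hd y (by linarith [hy.1])).differentiableAt.differentiableWithinAt
      · intro y hy
        rw [interior_Icc] at hy
        rw [(hd y (by linarith [hy.1])).deriv]
        have : 0 ≤ y - 1 := by linarith [hy.1]
        positivity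
    have := hm ⟨le_refl _, h⟩ ⟨h, le_refl _⟩ h
    rw [g1] at this
    exact this
  · have hm : AntitoneOn g (Set.Icc x 1) := by
      apply antitoneOn_of_deriv_nonpos (convex_Icc _ _)
      · intro y hy
        exact (hd y (by linarith [hy.1])).continuousAt.continuousWithinAt
      · intro y hy
        rw [interior_Icc] at hy
        exact (hd y (by linarith [hy.1])).differentiableAt.differentiableWithinAt
      · intro y hy
        rw [interior_Icc] at hy
        rw [(hd y (by linarith [hy.1])).deriv]
        apply div_nonpos_of_nonpos_of_nonneg _ (by positivity)
        have : y - 1 ≤ 0 := by linarith [hy.2]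
        nlinarith [mul_nonneg (sq_nonneg (y - 1)) (neg_nonneg.2 this)]
    have := hm ⟨le_refl _, h⟩ ⟨h, le_refl _⟩ h
    rw [g1] at this
    exact this

lemma aux_pt (p q : ℝ) (hp : 0 < p) (hq : 0 < q) :
    |q - p| ^ 2 / ((2 * p + 4 * q) / 3) ≤ p * Real.log (p / q) - p + q := by
  have h := aux_log (p / q) (by positivity)
  have e : p * ((5 * (p / q) ^ 2 - 4 * (p / q) - 1) / (2 * (p / q) ^ 2 + 4 * (p / q)))
      = |q - p| ^ 2 / ((2 * p + 4 * q) / 3) + p - q := by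
    rw [sq_abs]
    have e1 : 2 * (p / q) ^ 2 + 4 * (p / q) = 2 * p * (p + 2 * q) / q ^ 2 := by
      field_simp
      ring
    have e2 : 2 * p + 4 * q = 2 * (p + 2 * q) := by ring
    have : p + 2 * q ≠ 0 := by positivity
    rw [e1, e2]
    field_simp
    ring
  have := mul_nonneg hp.le h
  rw [mul_sub, e] at this
  linarith

lemma aux_pinsker (C : ℕ) (hC : 1 ≤ C) (w : Fin C → ℝ) (hw : w ∈ simplex C) (τ : ℝ)
    (hk : KL (uniform C) w ≤ (τ : EReal)) :
    (1 / 2) * ∑ c, |w c - 1 / (C : ℝ)| ≤ Real.sqrt (τ / 2) := by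
  have hC0 : (0 : ℝ) < C := by exact_mod_cast hC
  have hU : (0 : ℝ) < 1 / C := by positivity
  have hUs : ∑ _c : Fin C, (1 / (C : ℝ)) = 1 := by
    simp [hC0.ne']
  unfold KL uniform at hk
  split_ifs at hk with hpos
  · have hk' := EReal.coe_le_coe_iff.1 hk
    have hq : ∀ c, 0 < w c := fun c => hpos c hU
    have hcs := Finset.sum_sq_le_sum_mul_sum_of_sq_eq_mul Finset.univ
      (r := fun c => |w c - 1 / (C : ℝ)|)
      (f := fun c => |w c - 1 / (C : ℝ)| ^ 2 / ((2 * (1 / (C : ℝ)) + 4 * w c) / 3))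
      (g := fun c => (2 * (1 / (C : ℝ)) + 4 * w c) / 3)
      (fun c _ => by have := hq c; positivity)
      (fun c _ => by have := hq c; positivity)
      (fun c _ => by
        have := hq c
        have h3 : (2 * (1 / (C : ℝ)) + 4 * w c) / 3 ≠ 0 := by positivity
        rw [div_mul_cancel₀ _ h3])
    have hg : ∑ c, (2 * (1 / (C : ℝ)) + 4 * w c) / 3 = 2 := by
      rw [← Finset.sum_div, Finset.sum_add_distrib, ← Finset.mul_sum, ← Finset.mul_sum, hUs, hw.2]
      norm_num
    have hf : ∑ c, |w c - 1 / (C : ℝ)| ^ 2 / ((2 * (1 / (C : ℝ)) + 4 * w c) / 3) ≤ τ := by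
      calc _ ≤ ∑ c, ((1 / (C : ℝ)) * Real.log ((1 / (C : ℝ)) / w c) - 1 / (C : ℝ) + w c) :=
            Finset.sum_le_sum fun c _ => aux_pt _ _ hU (hq c)
        _ = ∑ c, ((1 / (C : ℝ)) * Real.log ((1 / (C : ℝ)) / w c)) := by
            rw [Finset.sum_add_distrib, Finset.sum_sub_distrib, hUs, hw.2]; ring
        _ ≤ τ := hk'
    rw [hg] at hcs
    apply Real.le_sqrt_of_sq_le
    nlinarith
  · simp at hk

lemma aux_lin (C : ℕ) (hC : 1 ≤ C) (ℓ w : Fin C → ℝ) (hw : w ∈ simplex C) (M m : ℝ)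
    (hM : ∀ c, ℓ c ≤ M) (hm : ∀ c, m ≤ ℓ c) :
    ∑ c, w c * ℓ c - (1 / C) * ∑ c, ℓ c ≤
      (M - m) * ((1 / 2) * ∑ c, |w c - 1 / (C : ℝ)|) := by
  have hC0 : (0 : ℝ) < C := by exact_mod_cast hC
  have hUs : ∑ _c : Fin C, (1 / (C : ℝ)) = 1 := by
    simp [hC0.ne']
  have e : ∑ c, w c * ℓ c - (1 / C) * ∑ c, ℓ c
      = ∑ c, (w c - 1 / (C : ℝ)) * (ℓ c - (M + m) / 2) := by
    have h1 : ∀ c, (w c - 1 / (C : ℝ)) * (ℓ c - (M + m) / 2)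
        = w c * ℓ c - (1 / C) * ℓ c - (w c - 1 / (C : ℝ)) * ((M + m) / 2) := fun c => by ring
    simp_rw [h1]
    rw [Finset.sum_sub_distrib, Finset.sum_sub_distrib, ← Finset.sum_mul, Finset.sum_sub_distrib,
      hUs, hw.2, Finset.mul_sum]
    ring
  rw [e, Finset.mul_sum, Finset.mul_sum]
  apply Finset.sum_le_sum
  intro c _
  have h2 : |ℓ c - (M + m) / 2| ≤ (M - m) / 2 := by
    rw [abs_le]; constructor <;> linarith [hM c, hm c]
  calc _ ≤ |w c - 1 / (C : ℝ)| * |ℓ c - (M + m) / 2| := by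
        rw [← abs_mul]; exact le_abs_self _
    _ ≤ |w c - 1 / (C : ℝ)| * ((M - m) / 2) := by gcongr
    _ = _ := by ring

lemma aux_uniform (C : ℕ) (hC : 1 ≤ C) (τ : ℝ) (hτ : 0 ≤ τ) :
    uniform C ∈ simplex C ∧ KL (uniform C) (uniform C) ≤ (τ : EReal) := by
  have hC0 : (0 : ℝ) < C := by exact_mod_cast hC
  refine ⟨⟨fun c => by unfold uniform; positivity, by simp [uniform, hC0.ne']⟩, ?_⟩
  unfold KL
  rw [if_pos (fun c h => h)]
  apply EReal.coe_le_coe_iff.2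
  simp [uniform, hC0.ne', hτ]

/-- right-continuity of the FAAL value at `τ = 0` with
quantitative bounds: `L_FAAL(ℓ, τ) → (1/C)·Σ_c ℓ_c` as `τ → 0⁺`, with
`0 ≤ L_FAAL(ℓ, τ) − (1/C)·Σ_c ℓ_c ≤ (max_c ℓ_c − min_c ℓ_c)·√(τ/2)`, using
Pinsker's total-variation bound `(1/2)·Σ_c |w_c − 1/C| ≤ √(τ/2)` for any
feasible `w`. -/
theorem faal_right_continuous_at_zero (C : ℕ) (hC : 1 ≤ C) (ℓ : Fin C → ℝ) :
    (∀ w ∈ simplex C, ∀ τ : ℝ, 0 ≤ τ → KL (uniform C) w ≤ (τ : EReal) →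
      (1 / 2) * ∑ c, |w c - 1 / (C : ℝ)| ≤ Real.sqrt (τ / 2)) ∧
    (∀ τ : ℝ, 0 ≤ τ →
      0 ≤ faal C ℓ τ - (1 / C) * ∑ c, ℓ c ∧
      faal C ℓ τ - (1 / C) * ∑ c, ℓ c ≤
        (Finset.univ.sup' ⟨⟨0, hC⟩, Finset.mem_univ _⟩ ℓ -
          Finset.univ.inf' ⟨⟨0, hC⟩, Finset.mem_univ _⟩ ℓ) * Real.sqrt (τ / 2)) ∧
    Filter.Tendsto (fun τ : ℝ => faal C ℓ τ) (nhdsWithin 0 (Set.Ioi 0))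
      (nhds ((1 / C) * ∑ c, ℓ c)) := by
  have hb : ∀ τ : ℝ, 0 ≤ τ →
      0 ≤ faal C ℓ τ - (1 / C) * ∑ c, ℓ c ∧
      faal C ℓ τ - (1 / C) * ∑ c, ℓ c ≤
        (Finset.univ.sup' ⟨⟨0, hC⟩, Finset.mem_univ _⟩ ℓ -
          Finset.univ.inf' ⟨⟨0, hC⟩, Finset.mem_univ _⟩ ℓ) * Real.sqrt (τ / 2) := by
    intro τ hτ
    set M := Finset.univ.sup' ⟨⟨0, hC⟩, Finset.mem_univ _⟩ ℓ with hMdef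
    set m := Finset.univ.inf' ⟨⟨0, hC⟩, Finset.mem_univ _⟩ ℓ with hmdef
    have hM : ∀ c, ℓ c ≤ M := fun c => Finset.le_sup' ℓ (Finset.mem_univ c)
    have hm : ∀ c, m ≤ ℓ c := fun c => Finset.inf'_le ℓ (Finset.mem_univ c)
    have hMm : 0 ≤ M - m := by linarith [hM ⟨0, hC⟩, hm ⟨0, hC⟩]
    obtain ⟨u1, u2⟩ := aux_uniform C hC τ hτ
    have hub : ∀ s ∈ {s | ∃ w ∈ simplex C, KL (uniform C) w ≤ (τ : EReal) ∧
        s = ∑ c, w c * ℓ c}, s ≤ (1 / C) * ∑ c, ℓ c + (M - m) * Real.sqrt (τ / 2) := by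
      rintro s ⟨w, hw, hk, rfl⟩
      have h1 := aux_lin C hC ℓ w hw M m hM hm
      have h2 := mul_le_mul_of_nonneg_left (aux_pinsker C hC w hw τ hk) hMm
      linarith
    have hmem : (1 / C) * ∑ c, ℓ c ∈ {s | ∃ w ∈ simplex C, KL (uniform C) w ≤ (τ : EReal) ∧
        s = ∑ c, w c * ℓ c} :=
      ⟨uniform C, u1, u2, by simp [uniform, Finset.mul_sum]⟩
    constructor
    · have := le_csSup ⟨_, hub⟩ hmem
      unfold faal
      linarith
    · have := csSup_le ⟨_, hmem⟩ hub
      unfold faal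
      linarith
  refine ⟨fun w hw τ _ hk => aux_pinsker C hC w hw τ hk, hb, ?_⟩
  set K := Finset.univ.sup' ⟨⟨0, hC⟩, Finset.mem_univ _⟩ ℓ -
          Finset.univ.inf' ⟨⟨0, hC⟩, Finset.mem_univ _⟩ ℓ with hK
  have hlim : Filter.Tendsto (fun τ : ℝ => (1 / C) * ∑ c, ℓ c + K * Real.sqrt (τ / 2))
      (nhdsWithin 0 (Set.Ioi 0)) (nhds ((1 / C) * ∑ c, ℓ c)) := by
    have hc : Continuous (fun τ : ℝ => (1 / C) * ∑ c, ℓ c + K * Real.sqrt (τ / 2)) := by fun_prop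
    have := hc.tendsto 0
    simp only [zero_div, Real.sqrt_zero, mul_zero, add_zero] at this
    exact this.mono_left nhdsWithin_le_nhds
  refine tendsto_of_tendsto_of_tendsto_of_le_of_le' tendsto_const_nhds hlim ?_ ?_
  · filter_upwards [self_mem_nhdsWithin] with τ hτ
    linarith [(hb τ (le_of_lt hτ)).1]
  · filter_upwards [self_mem_nhdsWithin] with τ hτ
    linarith [(hb τ (le_of_lt hτ)).2]
end
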